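/- Let γ ∈ ℝ and let Z_1, Z_2, … be independent standard GP(γ) random variables. Let q ≥ 3 be fixed and let K be a location-scale invariant kernel, not everywhere constant, such that E[|K((Z_{q−j:q−1})_{j=1}^{q})|^p] < ∞ for all p > 0 (with Z_{0:q−1} := 0). For index sets S, S' of positive integers with |S| = |S'| = m and |S ∩ S'| = ℓ, let ζ_{m,ℓ} = cov(K_m(Z_S), K_m(Z_{S'})). Suppose m = m_n satisfies m = o(n^{1−ε}) and ln(n) = o(m^{1−δ}) as n → ∞ for some ε, δ > 0, and set k = n/m. Then the variance of the U-statistic U^m_{n,Z} = C(n,m)^{−1} Σ_{I ⊂ [n], |I| = m} K_m(Z_I) satisfies |var(U^m_{n,Z}) − (m/k) ζ_{m,1}| = o(1/k) as n → ∞. -/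

import Mathlib

open MeasureTheory ProbabilityTheory Filter Real Set Topology
open scoped ENNReal NNReal Classical

noncomputable section

/-- The `j`-th largest entry of the tuple `x` (`j = 0` gives the maximum, `j = 1` the
second largest, ...); `0` when `j` is out of range. -/
def descStat {m : ℕ} (x : Fin m → ℝ) (j : ℕ) : ℝ :=
  if h : j < m then (x ∘ Tuple.sort x) ⟨m - 1 - j, by omega⟩ else 0

/-- The kernel of degree `m` obtained from `K` by applying it to the top-`q`
(descending) order statistics: `K_m(x_1,…,x_m) = K(x_{m:m},…,x_{m−q+1:m})`. -/
def Km {q : ℕ} (K : (Fin q → ℝ) → ℝ) (m : ℕ) (x : Fin m → ℝ) : ℝ :=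
  K fun j => descStat x (j : ℕ)

/-- `K(a x_1 + b, …, a x_q + b) = K(x_1, …, x_q)` for all `a > 0`, `b ∈ ℝ`. -/
def LocScaleInvariant {q : ℕ} (K : (Fin q → ℝ) → ℝ) : Prop :=
  ∀ a b : ℝ, 0 < a → ∀ x : Fin q → ℝ, K (fun j => a * x j + b) = K x

/-- `h_γ(y) = (y^γ - 1)/γ`, interpreted as `log y` when `γ = 0`. -/
def hGamma (γ : ℝ) (y : ℝ) : ℝ := if γ = 0 then Real.log y else (y ^ γ - 1) / γ

lemma measurable_hGamma (γ : ℝ) : Measurable (hGamma γ) := by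
  unfold hGamma
  split_ifs
  · exact Real.measurable_log
  · fun_prop

/-- The uniform distribution on `(0,1)`. -/
def unif01 : Measure ℝ := volume.restrict (Set.Ioo (0:ℝ) 1)

instance : IsProbabilityMeasure unif01 := ⟨by simp [unif01]⟩

/-- The standard Pareto(1) distribution, with cdf `1 - 1/y` for `y ≥ 1`. -/
def pareto1 : Measure ℝ := ProbabilityTheory.paretoMeasure 1 1

instance : IsProbabilityMeasure pareto1 :=
  ProbabilityTheory.isProbabilityMeasure_paretoMeasure one_pos one_pos

/-- The standard generalized Pareto distribution `GP(γ)`: the law of `h_γ(Y)` for `Y`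
standard Pareto(1). -/
def gpMeasure (γ : ℝ) : Measure ℝ := pareto1.map (hGamma γ)

instance (γ : ℝ) : IsProbabilityMeasure (gpMeasure γ) :=
  Measure.isProbabilityMeasure_map (measurable_hGamma γ).aemeasurable

/-- The unit exponential distribution: the law of `-log U` for `U` uniform on `(0,1)`. -/
def expMeasure1 : Measure ℝ := unif01.map fun u => -Real.log u

instance : IsProbabilityMeasure expMeasure1 :=
  Measure.isProbabilityMeasure_map Real.measurable_log.neg.aemeasurable

/-- The Erlang(q) distribution: the law of the sum of `q` independent unit exponentials. -/
def erlangMeasure (q : ℕ) : Measure ℝ :=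
  (Measure.pi fun _ : Fin q => expMeasure1).map fun e => ∑ i, e i

instance (q : ℕ) : IsProbabilityMeasure (erlangMeasure q) :=
  Measure.isProbabilityMeasure_map
    (Finset.measurable_sum _ fun i _ => measurable_pi_apply i).aemeasurable

/-- The joint law of `r` iid `GP(γ)` random variables. -/
def gpPi (γ : ℝ) (r : ℕ) : Measure (Fin r → ℝ) := Measure.pi fun _ => gpMeasure γ

instance (γ : ℝ) (r : ℕ) : IsProbabilityMeasure (gpPi γ r) := by
  unfold gpPi; infer_instance

/-- The vector `(Z_{q-j:q-1})_{j=1}^{q}`: the descending order statistics of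
`z_1,…,z_{q-1}` with an extra last entry `Z_{0:q-1} := 0`. -/
def refVec {q : ℕ} (z : Fin (q-1) → ℝ) : Fin q → ℝ := fun j => descStat z (j : ℕ)

/-- `θ = E[K((Z_{q-j:q-1})_{j=1}^{q})]` for iid `GP(γ)` variables `Z_1,…,Z_{q-1}`. -/
def thetaK (γ : ℝ) {q : ℕ} (K : (Fin q → ℝ) → ℝ) : ℝ :=
  ∫ z, K (refVec z) ∂(gpPi γ (q-1))

/-- all moments of `K((Z_{q-j:q-1})_{j=1}^{q})` are finite. -/
def MomentCond (γ : ℝ) {q : ℕ} (K : (Fin q → ℝ) → ℝ) : Prop :=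
  ∀ p : ℝ, 0 < p →
    ∫⁻ z, ENNReal.ofReal (|K (refVec z)| ^ p) ∂(gpPi γ (q-1)) < ⊤

/-- The asymptotic variance
`σ²_K(γ) = ∫_0^∞ (E[K̄_{q+1}((Z_{q-j:q-1})_{j=1}^q, h_γ(S_q/x))])² dx`. -/
def sigmaSqK (γ : ℝ) {q : ℕ} (K : (Fin q → ℝ) → ℝ) : ℝ :=
  ∫ x in Set.Ioi (0:ℝ),
    (∫ zs : (Fin (q-1) → ℝ) × ℝ,
        (Km K (q+1) (Fin.snoc (refVec zs.1) (hGamma γ (zs.2 / x))) - thetaK γ K)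
      ∂((gpPi γ (q-1)).prod (erlangMeasure q))) ^ 2

/-- The U-statistic with kernel `K_m` evaluated on the sample `z`. -/
def UStat {q : ℕ} (K : (Fin q → ℝ) → ℝ) (m n : ℕ) (z : Fin n → ℝ) : ℝ :=
  ((n.choose m : ℝ))⁻¹ *
    ∑ I ∈ Finset.powersetCard m (Finset.univ : Finset (Fin n)),
      Km K I.card fun j => z (I.orderIsoOfFin rfl j).1

/-- Condition on the degree sequence: `m = o(n^{1-ε})` and `log n = o(m^{1-δ})`. -/
def DegreeCond (m : ℕ → ℕ) : Prop :=
  ∃ ε > (0:ℝ), ∃ δ > (0:ℝ),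
    Tendsto (fun n => (m n : ℝ) / (n : ℝ) ^ (1 - ε)) atTop (𝓝 0) ∧
    Tendsto (fun n : ℕ => Real.log n / (m n : ℝ) ^ (1 - δ)) atTop (𝓝 0)

/-- `ζ_{m,ℓ} = cov(K_m(Z_S), K_m(Z_{S'}))` for the blocks `S = [1:m]`,
`S' = [(m-ℓ+1):(2m-ℓ)]` (zero-indexed here), which overlap in `ℓ` indices. -/
def zetaCov {Ω : Type*} [MeasurableSpace Ω] (P : Measure Ω) {q : ℕ}
    (K : (Fin q → ℝ) → ℝ) (Z : ℕ → Ω → ℝ) (m ℓ : ℕ) : ℝ :=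
  (∫ ω, Km K m (fun i : Fin m => Z i ω) * Km K m (fun i : Fin m => Z (m - ℓ + i) ω) ∂P)
    - (∫ ω, Km K m (fun i : Fin m => Z i ω) ∂P)
      * (∫ ω, Km K m (fun i : Fin m => Z (m - ℓ + i) ω) ∂P)

/-- Convergence in distribution to a Gaussian, expressed via pointwise convergence of
the cumulative distribution functions (the Gaussian cdf being continuous). -/
def TendstoGaussian {Ω : Type*} [MeasurableSpace Ω] (P : Measure Ω)
    (T : ℕ → Ω → ℝ) (μ : ℝ) (v : ℝ≥0) : Prop :=
  ∀ x : ℝ, Tendsto (fun n => (P {ω | T n ω ≤ x}).toReal) atTop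
    (𝓝 ((gaussianReal μ v (Set.Iic x)).toReal))

/-- Convergence in probability to the constant `c`. -/
def TendstoInProb {Ω : Type*} [MeasurableSpace Ω] (P : Measure Ω)
    (T : ℕ → Ω → ℝ) (c : ℝ) : Prop :=
  ∀ ε : ℝ, 0 < ε → Tendsto (fun n => (P {ω | ε ≤ |T n ω - c|}).toReal) atTop (𝓝 0)

/-! Let `ζ ℓ` be the covariance of two kernel values with `ℓ` common arguments, and let `δ j` be
the `j`-th forward difference of `ζ` at `0`, so that `ζ m = ∑ j, C(m, j) δ j`. Counting pairs of
`m`-subsets of `[n]` by their common subsets gives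
`var U = ∑ j, C(m, j) δ j * (C(m, j) / C(n, j))`. Each `δ j` is nonnegative, being the common
covariance of infinitely many square-integrable variables of equal variance, and
`C(m, j) / C(n, j) ≤ (m / n) ^ j`. As the term `j = 1` is `m² / n * ζ 1` and `ζ 0 = 0`, this leaves
`0 ≤ var U - m² / n * ζ 1 ≤ (m / n) ^ 2 * ζ m`.

It remains to bound `ζ m = var (K_m (Z_1, …, Z_m))` uniformly in `m`. By threshold stability, given
the minimum of `m + 1` GP variables the others are an increasing affine image of `m` fresh GP
variables, so location-scale invariance makes the law of `K_m (Z_1, …, Z_m)` the same for all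
`m ≥ q - 1`. -/

section FiniteDifferences

open scoped Finset

/-- The `j`-th forward difference of `ζ` at `0`. When `ζ ℓ` is the covariance of two kernel values
with `ℓ` common arguments, this is the variance of the `j`-th Hoeffding projection of the kernel. -/
def hoeffdingCoeff (ζ : ℕ → ℝ) (j : ℕ) : ℝ := (fwdDiff 1)^[j] ζ 0

lemma hoeffdingCoeff_zero (ζ : ℕ → ℝ) : hoeffdingCoeff ζ 0 = ζ 0 := rfl

lemma hoeffdingCoeff_one (ζ : ℕ → ℝ) : hoeffdingCoeff ζ 1 = ζ 1 - ζ 0 := rfl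

lemma sum_choose_mul_hoeffdingCoeff (ζ : ℕ → ℝ) (n : ℕ) :
    ∑ k ∈ Finset.range (n + 1), (n.choose k : ℝ) * hoeffdingCoeff ζ k = ζ n := by
  simpa [hoeffdingCoeff] using (shift_eq_sum_fwdDiff_iter 1 ζ n 0).symm

lemma sum_powerset_hoeffdingCoeff {α : Type*} (ζ : ℕ → ℝ) (S : Finset α) :
    ∑ A ∈ S.powerset, hoeffdingCoeff ζ #A = ζ #S := by
  simpa only [Finset.sum_powerset_apply_card, nsmul_eq_mul]
    using sum_choose_mul_hoeffdingCoeff ζ #S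

lemma sum_powerset_neg_one_pow_mul_inter_eq_zero {α R : Type*} [DecidableEq α] [Ring R]
    {A C : Finset α} {a : α} (haA : a ∈ A) (haC : a ∉ C) (φ : Finset α → R) :
    ∑ B ∈ A.powerset, (-1) ^ #B * φ (B ∩ C) = 0 := by
  rw [← Finset.insert_erase haA, Finset.sum_powerset_insert (Finset.notMem_erase a A),
    ← Finset.sum_add_distrib]
  refine Finset.sum_eq_zero fun B hB => ?_
  have haB : a ∉ B := fun h => Finset.notMem_erase a A (Finset.mem_powerset.1 hB h)
  rw [Finset.card_insert_of_notMem haB, Finset.insert_inter_of_notMem haC, pow_succ]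
  simp

lemma sum_powerset_sum_powerset_neg_one_pow_inter {α : Type*} [DecidableEq α]
    (ζ : ℕ → ℝ) (A : Finset α) :
    ∑ C ∈ A.powerset, ∑ B ∈ A.powerset, (-1) ^ #C * ((-1) ^ #B * ζ #(B ∩ C)) =
      hoeffdingCoeff ζ #A := by
  have hproper : ∀ C ∈ A.powerset, C ≠ A →
      ∑ B ∈ A.powerset, (-1 : ℝ) ^ #C * ((-1) ^ #B * ζ #(B ∩ C)) = 0 := fun C hC hCA => by
    obtain ⟨a, haA, haC⟩ :=
      Finset.exists_of_ssubset ((Finset.mem_powerset.1 hC).ssubset_of_ne hCA)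
    rw [← Finset.mul_sum,
      sum_powerset_neg_one_pow_mul_inter_eq_zero haA haC fun B => ζ #B, mul_zero]
  have hsign : ∀ k ≤ #A, (-1 : ℝ) ^ #A * (-1) ^ k = (-1) ^ (#A - k) := fun k hk => by
    rw [← pow_add, show #A + k = #A - k + (k + k) by omega, pow_add, Even.neg_one_pow ⟨k, rfl⟩,
      mul_one]
  calc ∑ C ∈ A.powerset, ∑ B ∈ A.powerset, (-1 : ℝ) ^ #C * ((-1) ^ #B * ζ #(B ∩ C))
      = ∑ B ∈ A.powerset, (-1 : ℝ) ^ #A * ((-1) ^ #B * ζ #(B ∩ A)) :=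
        Finset.sum_eq_single_of_mem A (Finset.mem_powerset_self A) hproper
    _ = ∑ B ∈ A.powerset, (-1 : ℝ) ^ (#A - #B) * ζ #B := by
        refine Finset.sum_congr rfl fun B hB => ?_
        have hBA := Finset.mem_powerset.1 hB
        rw [Finset.inter_eq_left.2 hBA, ← mul_assoc, hsign _ (Finset.card_le_card hBA)]
    _ = hoeffdingCoeff ζ #A := by
        rw [Finset.sum_powerset_apply_card fun k => (-1 : ℝ) ^ (#A - k) * ζ k, hoeffdingCoeff,
          fwdDiff_iter_eq_sum_shift]
        refine Finset.sum_congr rfl fun k _ => ?_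
        simp only [zero_add, smul_eq_mul, mul_one, nsmul_eq_mul, zsmul_eq_mul]
        push_cast
        ring

end FiniteDifferences

section SubsetCounts

open scoped Finset

lemma choose_mul_pow_le_pow_mul_choose {m n : ℕ} (hmn : m ≤ n) (a : ℕ) :
    m.choose a * n ^ a ≤ m ^ a * n.choose a := by
  induction a with
  | zero => simp
  | succ a ih =>
    have hsub : (m - a) * n ≤ m * (n - a) := by
      rw [Nat.sub_mul, Nat.mul_sub, mul_comm m a]
      exact Nat.sub_le_sub_left (Nat.mul_le_mul_left a hmn) _
    refine Nat.le_of_mul_le_mul_right ?_ a.succ_pos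
    calc m.choose (a + 1) * n ^ (a + 1) * (a + 1)
        = m.choose a * n ^ a * ((m - a) * n) := by
          rw [pow_succ, mul_right_comm, Nat.choose_succ_right_eq]; ring
      _ ≤ m ^ a * n.choose a * (m * (n - a)) := Nat.mul_le_mul ih hsub
      _ = m ^ (a + 1) * n.choose (a + 1) * (a + 1) := by
          rw [mul_assoc _ (n.choose (a + 1)), Nat.choose_succ_right_eq]; ring

lemma choose_div_choose_le_div_pow {m n : ℕ} (hmn : m ≤ n) (a : ℕ) :
    (m.choose a : ℝ) / n.choose a ≤ ((m : ℝ) / n) ^ a := by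
  rcases lt_or_ge n a with hna | hna
  · rw [Nat.choose_eq_zero_of_lt hna, Nat.cast_zero, div_zero]
    positivity
  have hle : (m.choose a : ℝ) * n ^ a ≤ m ^ a * n.choose a := by
    exact_mod_cast choose_mul_pow_le_pow_mul_choose hmn a
  have hpow : 0 < (n : ℝ) ^ a := by
    exact_mod_cast Nat.pow_pos_iff.2 (n.eq_zero_or_pos.symm.imp_right fun h => by omega)
  rwa [div_pow, div_le_div_iff₀ (Nat.cast_pos.2 (Nat.choose_pos hna)) hpow]

lemma card_filter_subset_powersetCard_div_choose {α : Type*} [DecidableEq α] {A S : Finset α}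
    {m : ℕ} (hAS : A ⊆ S) (hmS : m ≤ #S) :
    (#{I ∈ S.powersetCard m | A ⊆ I} : ℝ) / (#S).choose m = (m.choose #A : ℝ) / (#S).choose #A := by
  have hS : ((#S).choose m : ℝ) ≠ 0 := Nat.cast_ne_zero.2 (Nat.choose_pos hmS).ne'
  have hA : ((#S).choose #A : ℝ) ≠ 0 :=
    Nat.cast_ne_zero.2 (Nat.choose_pos (Finset.card_le_card hAS)).ne'
  rcases le_or_gt #A m with hAm | hAm
  · rw [Finset.card_filter_powersetCard_subset _ _ _ hAS hAm, div_eq_div_iff hS hA, mul_comm,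
      mul_comm (m.choose #A : ℝ)]
    exact_mod_cast (Nat.choose_mul hAm).symm
  · rw [Finset.filter_false_of_mem fun I hI hAI => ?_, Nat.choose_eq_zero_of_lt hAm]
    · simp
    · have := Finset.card_le_card hAI
      have := (Finset.mem_powersetCard.1 hI).2
      omega

lemma sum_powersetCard_sum_powersetCard_inter {α : Type*} [DecidableEq α] (ζ : ℕ → ℝ)
    (S : Finset α) (m : ℕ) :
    ∑ I ∈ S.powersetCard m, ∑ J ∈ S.powersetCard m, ζ #(I ∩ J) =
      ∑ A ∈ S.powerset, (#{I ∈ S.powersetCard m | A ⊆ I} : ℝ) ^ 2 * hoeffdingCoeff ζ #A := by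
  have hinter : ∀ I ∈ S.powersetCard m, ∀ J, ζ #(I ∩ J) =
      ∑ A ∈ S.powerset, if A ⊆ I ∧ A ⊆ J then hoeffdingCoeff ζ #A else 0 := fun I hI J => by
    rw [← sum_powerset_hoeffdingCoeff ζ (I ∩ J), ← Finset.sum_filter]
    congr 1
    ext A
    have hIS := (Finset.mem_powersetCard.1 hI).1
    simp only [Finset.mem_powerset, Finset.subset_inter_iff, Finset.mem_filter]
    exact ⟨fun h => ⟨h.1.trans hIS, h⟩, And.right⟩
  calc ∑ I ∈ S.powersetCard m, ∑ J ∈ S.powersetCard m, ζ #(I ∩ J)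
      = ∑ I ∈ S.powersetCard m, ∑ J ∈ S.powersetCard m, ∑ A ∈ S.powerset,
          if A ⊆ I ∧ A ⊆ J then hoeffdingCoeff ζ #A else 0 :=
        Finset.sum_congr rfl fun I hI => Finset.sum_congr rfl fun J _ => hinter I hI J
    _ = ∑ A ∈ S.powerset, ∑ I ∈ S.powersetCard m, ∑ J ∈ S.powersetCard m,
          if A ⊆ I ∧ A ⊆ J then hoeffdingCoeff ζ #A else 0 := by
        rw [Finset.sum_congr rfl fun I _ => Finset.sum_comm, Finset.sum_comm]
    _ = _ := by
        simp only [ite_and, Finset.sum_ite_irrel, Finset.sum_const_zero, ← Finset.sum_filter,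
          Finset.sum_const, nsmul_eq_mul, sq, mul_assoc]

end SubsetCounts

section OverlapCovariance

open scoped Finset

variable {Ω : Type*} [MeasurableSpace Ω] {P : Measure Ω}

lemma nonneg_of_forall_covariance_eq [IsFiniteMeasure P] {W : ℕ → Ω → ℝ} {c v : ℝ}
    (hW : ∀ r, MemLp (W r) 2 P) (hvar : ∀ r, Var[W r; P] = v)
    (hcov : ∀ r s, r ≠ s → cov[W r, W s; P] = c) : 0 ≤ c := by
  have hsum : ∀ N : ℕ, Var[∑ r ∈ Finset.range (N + 1), W r; P] = (N + 1) * (v + N * c) := by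
    intro N
    rw [variance_sum' fun r _ => hW r]
    have hrow : ∀ r ∈ Finset.range (N + 1),
        ∑ s ∈ Finset.range (N + 1), cov[W r, W s; P] = v + N * c := fun r hr => by
      rw [← Finset.add_sum_erase _ _ hr, covariance_self (hW r).aemeasurable, hvar,
        Finset.sum_congr rfl fun s hs => hcov r s (Finset.ne_of_mem_erase hs).symm,
        Finset.sum_const, Finset.card_erase_of_mem hr, Finset.card_range, Nat.add_sub_cancel,
        nsmul_eq_mul]
    rw [Finset.sum_congr rfl hrow, Finset.sum_const, Finset.card_range, nsmul_eq_mul,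
      Nat.cast_succ]
  have hlower : ∀ N : ℕ, 0 ≤ v + N * c := fun N =>
    nonneg_of_mul_nonneg_right (hsum N ▸ variance_nonneg _ _) N.cast_add_one_pos
  by_contra! hc
  obtain ⟨N, hN⟩ := exists_nat_gt (v / -c)
  rw [div_lt_iff₀ (neg_pos.2 hc)] at hN
  linarith [hlower N]

/-- `Y I`, for index sets `I` of size `m`, are square-integrable variables any two of which have a
covariance `ζ ℓ` depending only on the size `ℓ` of the overlap of their index sets. -/
structure HasOverlapCovariance (P : Measure Ω) (Y : Finset ℕ → Ω → ℝ) (m : ℕ) (ζ : ℕ → ℝ) :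
    Prop where
  memLp : ∀ I, #I = m → MemLp (Y I) 2 P
  covariance_eq : ∀ I J, #I = m → #J = m → cov[Y I, Y J; P] = ζ #(I ∩ J)

/-- `B` filled up to `m` elements from the `r`-th of disjoint blocks of length `m` beyond `j`. -/
def freshPadding (m j r : ℕ) (B : Finset ℕ) : Finset ℕ :=
  B ∪ Finset.Ico (j + m * r) (j + m * r + (m - #B))

lemma card_le_of_subset_range {j : ℕ} {B : Finset ℕ} (hB : B ⊆ Finset.range j) : #B ≤ j :=
  (Finset.card_le_card hB).trans_eq (Finset.card_range j)

lemma disjoint_Ico_of_subset_range {j : ℕ} {B : Finset ℕ} (hB : B ⊆ Finset.range j) (a b : ℕ) :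
    Disjoint B (Finset.Ico (j + a) b) :=
  Finset.disjoint_left.2 fun i hi hi' => by
    have := Finset.mem_range.1 (hB hi)
    have := (Finset.mem_Ico.1 hi').1
    omega

lemma card_freshPadding {m j r : ℕ} {B : Finset ℕ} (hjm : j ≤ m) (hB : B ⊆ Finset.range j) :
    #(freshPadding m j r B) = m := by
  have := card_le_of_subset_range hB
  rw [freshPadding, Finset.card_union_of_disjoint (disjoint_Ico_of_subset_range hB _ _),
    Nat.card_Ico]
  omega

lemma freshPadding_inter_freshPadding {m j r s : ℕ} {B C : Finset ℕ}
    (hB : B ⊆ Finset.range j) (hC : C ⊆ Finset.range j) :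
    freshPadding m j r B ∩ freshPadding m j s C =
      B ∩ C ∪ Finset.Ico (j + m * r) (j + m * r + (m - #B)) ∩
        Finset.Ico (j + m * s) (j + m * s + (m - #C)) := by
  rw [freshPadding, freshPadding, Finset.union_inter_distrib_right,
    Finset.inter_union_distrib_left, Finset.inter_union_distrib_left,
    Finset.disjoint_iff_inter_eq_empty.1 (disjoint_Ico_of_subset_range hB _ _),
    Finset.disjoint_iff_inter_eq_empty.1 (disjoint_Ico_of_subset_range hC _ _).symm,
    Finset.union_empty, Finset.empty_union]

lemma freshPadding_inter_freshPadding_of_ne {m j r s : ℕ} (hrs : r ≠ s) {B C : Finset ℕ}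
    (hB : B ⊆ Finset.range j) (hC : C ⊆ Finset.range j) :
    freshPadding m j r B ∩ freshPadding m j s C = B ∩ C := by
  rw [freshPadding_inter_freshPadding hB hC, Finset.union_eq_left]
  rintro i hi
  simp only [Finset.mem_inter, Finset.mem_Ico] at hi
  rcases hrs.lt_or_gt with hlt | hlt
  · nlinarith [Nat.mul_le_mul_left m hlt, m.sub_le #B]
  · nlinarith [Nat.mul_le_mul_left m hlt, m.sub_le #C]

lemma card_freshPadding_inter_freshPadding_self {m j r : ℕ} {B C : Finset ℕ}
    (hB : B ⊆ Finset.range j) (hC : C ⊆ Finset.range j) :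
    #(freshPadding m j r B ∩ freshPadding m j r C) = #(B ∩ C) + min (m - #B) (m - #C) := by
  rw [freshPadding_inter_freshPadding hB hC, Finset.Ico_inter_Ico, max_self, min_add_add_left,
    Finset.card_union_of_disjoint
      (disjoint_Ico_of_subset_range (Finset.inter_subset_left.trans hB) _ _), Nat.card_Ico,
    Nat.add_sub_cancel_left]

namespace HasOverlapCovariance

variable {Y : Finset ℕ → Ω → ℝ} {m : ℕ} {ζ : ℕ → ℝ}

lemma covariance_alternating_sum [IsFiniteMeasure P] (h : HasOverlapCovariance P Y m ζ)
    {𝒜 : Finset (Finset ℕ)} {f g : Finset ℕ → Finset ℕ}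
    (hf : ∀ A ∈ 𝒜, #(f A) = m) (hg : ∀ A ∈ 𝒜, #(g A) = m) :
    cov[fun ω => ∑ C ∈ 𝒜, (-1) ^ #C * Y (f C) ω, fun ω => ∑ B ∈ 𝒜, (-1) ^ #B * Y (g B) ω; P] =
      ∑ C ∈ 𝒜, ∑ B ∈ 𝒜, (-1) ^ #C * ((-1) ^ #B * ζ #(f C ∩ g B)) := by
  rw [covariance_fun_sum_fun_sum' (fun C hC => (h.memLp _ (hf C hC)).const_mul _)
    fun B hB => (h.memLp _ (hg B hB)).const_mul _]
  refine Finset.sum_congr rfl fun C hC => Finset.sum_congr rfl fun B hB => ?_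
  rw [covariance_const_mul_left, covariance_const_mul_right,
    h.covariance_eq _ _ (hf C hC) (hg B hB)]

-- Inclusion-exclusion over the subsets `B` of `range j`, each completed by fresh indices, gives
-- exchangeable approximations of the `j`-th Hoeffding projection with common covariance
-- `hoeffdingCoeff ζ j`.
lemma hoeffdingCoeff_nonneg [IsFiniteMeasure P] (h : HasOverlapCovariance P Y m ζ) {j : ℕ}
    (hjm : j ≤ m) : 0 ≤ hoeffdingCoeff ζ j := by
  have hcard : ∀ r, ∀ B ∈ (Finset.range j).powerset, #(freshPadding m j r B) = m :=
    fun r B hB => card_freshPadding hjm (Finset.mem_powerset.1 hB)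
  have hmem : ∀ r, MemLp (fun ω => ∑ B ∈ (Finset.range j).powerset,
      (-1) ^ #B * Y (freshPadding m j r B) ω) 2 P := fun r =>
    memLp_finsetSum _ fun B hB => (h.memLp _ (hcard r B hB)).const_mul _
  refine nonneg_of_forall_covariance_eq (v := ∑ C ∈ (Finset.range j).powerset,
    ∑ B ∈ (Finset.range j).powerset,
      (-1) ^ #C * ((-1) ^ #B * ζ (#(C ∩ B) + min (m - #C) (m - #B))))
    hmem (fun r => ?_) fun r s hrs => ?_
  · rw [← covariance_self (hmem r).aemeasurable, h.covariance_alternating_sum (hcard r) (hcard r)]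
    refine Finset.sum_congr rfl fun C hC => Finset.sum_congr rfl fun B hB => ?_
    rw [card_freshPadding_inter_freshPadding_self (Finset.mem_powerset.1 hC)
      (Finset.mem_powerset.1 hB)]
  · rw [h.covariance_alternating_sum (hcard r) (hcard s), ← Finset.card_range j,
      ← sum_powerset_sum_powerset_neg_one_pow_inter, Finset.card_range]
    refine Finset.sum_congr rfl fun C hC => Finset.sum_congr rfl fun B hB => ?_
    rw [freshPadding_inter_freshPadding_of_ne hrs (Finset.mem_powerset.1 hC)
      (Finset.mem_powerset.1 hB), Finset.inter_comm]

lemma variance_average [IsFiniteMeasure P] (h : HasOverlapCovariance P Y m ζ) {S : Finset ℕ}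
    (hmS : m ≤ #S) :
    Var[fun ω => ((#S).choose m : ℝ)⁻¹ * ∑ I ∈ S.powersetCard m, Y I ω; P] =
      ∑ a ∈ Finset.range (m + 1),
        (m.choose a : ℝ) * hoeffdingCoeff ζ a * ((m.choose a : ℝ) / (#S).choose a) := by
  have hcard : ∀ I ∈ S.powersetCard m, #I = m := fun I hI => (Finset.mem_powersetCard.1 hI).2
  calc Var[fun ω => ((#S).choose m : ℝ)⁻¹ * ∑ I ∈ S.powersetCard m, Y I ω; P]
      = ((#S).choose m : ℝ)⁻¹ ^ 2 *
          ∑ I ∈ S.powersetCard m, ∑ J ∈ S.powersetCard m, ζ #(I ∩ J) := by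
        rw [variance_const_mul, variance_fun_sum' fun I hI => h.memLp I (hcard I hI)]
        exact congrArg _ <| Finset.sum_congr rfl fun I hI => Finset.sum_congr rfl fun J hJ =>
          h.covariance_eq I J (hcard I hI) (hcard J hJ)
    _ = ∑ A ∈ S.powerset, ((m.choose #A : ℝ) / (#S).choose #A) ^ 2 * hoeffdingCoeff ζ #A := by
        rw [sum_powersetCard_sum_powersetCard_inter, Finset.mul_sum]
        refine Finset.sum_congr rfl fun A hA => ?_
        rw [← card_filter_subset_powersetCard_div_choose (Finset.mem_powerset.1 hA) hmS]
        ring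
    _ = ∑ a ∈ Finset.range (#S + 1),
          (m.choose a : ℝ) * hoeffdingCoeff ζ a * ((m.choose a : ℝ) / (#S).choose a) := by
        rw [Finset.sum_powerset_apply_card fun a =>
          ((m.choose a : ℝ) / (#S).choose a) ^ 2 * hoeffdingCoeff ζ a]
        refine Finset.sum_congr rfl fun a ha => ?_
        have hpos := Nat.choose_pos (Finset.mem_range_succ_iff.1 ha)
        rw [nsmul_eq_mul]
        field_simp
    _ = _ := by
        refine (Finset.sum_subset (Finset.range_mono (by omega)) fun a _ ha => ?_).symm
        rw [Nat.choose_eq_zero_of_lt (by simpa using ha)]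
        simp

lemma variance_average_sub [IsFiniteMeasure P] (h : HasOverlapCovariance P Y m ζ)
    (hζ : ζ 0 = 0) {S : Finset ℕ} (hmS : m ≤ #S) (hm : m ≠ 0) :
    Var[fun ω => ((#S).choose m : ℝ)⁻¹ * ∑ I ∈ S.powersetCard m, Y I ω; P] -
        (m : ℝ) ^ 2 / #S * ζ 1 =
      ∑ a ∈ Finset.Ico 2 (m + 1),
        (m.choose a : ℝ) * hoeffdingCoeff ζ a * ((m.choose a : ℝ) / (#S).choose a) := by
  rw [h.variance_average hmS, Finset.range_eq_Ico, Finset.sum_eq_sum_Ico_succ_bot (by omega),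
    Finset.sum_eq_sum_Ico_succ_bot (by omega), zero_add, hoeffdingCoeff_zero, hoeffdingCoeff_one,
    hζ, Nat.choose_one_right, Nat.choose_one_right]
  ring

theorem abs_variance_average_sub_le [IsFiniteMeasure P] (h : HasOverlapCovariance P Y m ζ)
    (hζ : ζ 0 = 0) {S : Finset ℕ} (hmS : m ≤ #S) (hm : m ≠ 0) :
    |Var[fun ω => ((#S).choose m : ℝ)⁻¹ * ∑ I ∈ S.powersetCard m, Y I ω; P] -
      (m : ℝ) ^ 2 / #S * ζ 1| ≤ ((m : ℝ) / #S) ^ 2 * ζ m := by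
  have hδ : ∀ a ∈ Finset.range (m + 1), 0 ≤ (m.choose a : ℝ) * hoeffdingCoeff ζ a := fun a ha =>
    mul_nonneg (Nat.cast_nonneg _) (h.hoeffdingCoeff_nonneg (Finset.mem_range_succ_iff.1 ha))
  have hIco : Finset.Ico 2 (m + 1) ⊆ Finset.range (m + 1) := by
    rw [Finset.range_eq_Ico]
    exact Finset.Ico_subset_Ico_left (Nat.zero_le 2)
  have hratio : ∀ a ∈ Finset.Ico 2 (m + 1),
      (m.choose a : ℝ) / (#S).choose a ≤ ((m : ℝ) / #S) ^ 2 := fun a ha =>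
    (choose_div_choose_le_div_pow hmS a).trans <| pow_le_pow_of_le_one (by positivity)
      (div_le_one_of_le₀ (Nat.cast_le.2 hmS) (Nat.cast_nonneg _)) (Finset.mem_Ico.1 ha).1
  rw [h.variance_average_sub hζ hmS hm, abs_of_nonneg
    (Finset.sum_nonneg fun a ha => mul_nonneg (hδ a (hIco ha)) (by positivity))]
  calc ∑ a ∈ Finset.Ico 2 (m + 1),
        (m.choose a : ℝ) * hoeffdingCoeff ζ a * ((m.choose a : ℝ) / (#S).choose a)
      ≤ ∑ a ∈ Finset.Ico 2 (m + 1), (m.choose a : ℝ) * hoeffdingCoeff ζ a * ((m : ℝ) / #S) ^ 2 :=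
        Finset.sum_le_sum fun a ha => mul_le_mul_of_nonneg_left (hratio a ha) (hδ a (hIco ha))
    _ ≤ ∑ a ∈ Finset.range (m + 1), (m.choose a : ℝ) * hoeffdingCoeff ζ a * ((m : ℝ) / #S) ^ 2 :=
        Finset.sum_le_sum_of_subset_of_nonneg hIco fun a ha _ =>
          mul_nonneg (hδ a ha) (sq_nonneg _)
    _ = ((m : ℝ) / #S) ^ 2 * ζ m := by
        rw [← Finset.sum_mul, sum_choose_mul_hoeffdingCoeff, mul_comm]

end HasOverlapCovariance

end OverlapCovariance

section SymmetricKernels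

open scoped Finset

lemma nonempty_subtype_equiv_of_card_eq {α β : Type*} {p : α → Prop} {p' : β → Prop}
    (A : Finset α) (A' : Finset β) (hcard : #A = #A') (hp : ∀ i, p i ↔ i ∈ A)
    (hp' : ∀ i, p' i ↔ i ∈ A') : Nonempty ({i // p i} ≃ {i // p' i}) :=
  ⟨(Equiv.subtypeEquivRight hp).trans
    ((Finset.equivOfCardEq hcard).trans (Equiv.subtypeEquivRight hp').symm)⟩

lemma exists_perm_map_eq_and_map_eq {α : Type*} [DecidableEq α] [Countable α] [Infinite α]
    {I J I' J' : Finset α} (hI : #I = #I') (hJ : #J = #J') (hIJ : #(I ∩ J) = #(I' ∩ J')) :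
    ∃ τ : Equiv.Perm α, I.map τ.toEmbedding = I' ∧ J.map τ.toEmbedding = J' := by
  have hcompl : ∀ A B : Finset α,
      {i | (decide (i ∈ A), decide (i ∈ B)) = (false, false)}.Infinite := fun A B =>
    (A ∪ B).finite_toSet.infinite_compl.mono fun i hi => by simpa using hi
  have hfiber : ∀ c : Bool × Bool, Nonempty ({i // (decide (i ∈ I), decide (i ∈ J)) = c} ≃
      {i // (decide (i ∈ I'), decide (i ∈ J')) = c}) := by
    have hsdiff := Finset.card_sdiff_add_card_inter I J
    have hsdiff' := Finset.card_sdiff_add_card_inter I' J'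
    have hsdiff_symm := Finset.card_sdiff_add_card_inter J I
    have hsdiff_symm' := Finset.card_sdiff_add_card_inter J' I'
    rw [Finset.inter_comm] at hsdiff_symm hsdiff_symm'
    rintro ⟨_ | _, _ | _⟩
    · have : Infinite {i // (decide (i ∈ I), decide (i ∈ J)) = (false, false)} :=
        (hcompl I J).to_subtype
      have : Infinite {i // (decide (i ∈ I'), decide (i ∈ J')) = (false, false)} :=
        (hcompl I' J').to_subtype
      exact nonempty_equiv_of_countable
    · exact nonempty_subtype_equiv_of_card_eq (J \ I) (J' \ I') (by omega)
        (by simp [and_comm]) (by simp [and_comm])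
    · exact nonempty_subtype_equiv_of_card_eq (I \ J) (I' \ J') (by omega) (by simp) (by simp)
    · exact nonempty_subtype_equiv_of_card_eq (I ∩ J) (I' ∩ J') hIJ (by simp) (by simp)
  let τ : Equiv.Perm α := Equiv.ofFiberEquiv fun c => (hfiber c).some
  have hτ : ∀ i, (τ i ∈ I' ↔ i ∈ I) ∧ (τ i ∈ J' ↔ i ∈ J) := fun i => by
    simpa only [Prod.mk.injEq, decide_eq_decide] using
      Equiv.ofFiberEquiv_map (fun c => (hfiber c).some) i
  refine ⟨τ, ?_, ?_⟩ <;> ext i <;> obtain ⟨i, rfl⟩ := τ.surjective i <;> simp [hτ]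

variable {E : Type*} {m : ℕ} {f : (Fin m → E) → ℝ}

/-- Invariance of a function of `m` arguments under permutations of its arguments. -/
def IsSymmetricKernel (f : (Fin m → E) → ℝ) : Prop :=
  ∀ (σ : Equiv.Perm (Fin m)) (x : Fin m → E), f (x ∘ σ) = f x

/-- The kernel `f` evaluated at the entries of the sequence `x` with index in `I`, in increasing
order of the indices; `0` unless `I` has `m` elements. -/
def kernelOn (f : (Fin m → E) → ℝ) (x : ℕ → E) (I : Finset ℕ) : ℝ :=
  if h : #I = m then f (x ∘ I.orderEmbOfFin h) else 0

namespace IsSymmetricKernel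

lemma apply_comp_eq_of_map_univ_eq {α : Type*} (hf : IsSymmetricKernel f) (x : α → E)
    {e e' : Fin m ↪ α} (h : Finset.univ.map e = Finset.univ.map e') : f (x ∘ e) = f (x ∘ e') := by
  have hmem : ∀ i, ∃ j, e' j = e i := fun i => by
    have := Finset.mem_map_of_mem e (Finset.mem_univ i)
    simpa [h] using this
  choose σ hσ using hmem
  have hinj : Function.Injective σ := fun i j hij => e.injective (by rw [← hσ, ← hσ, hij])
  rw [← hf (Equiv.ofBijective σ (Finite.injective_iff_bijective.1 hinj)) (x ∘ e')]
  exact congrArg f (funext fun i => congrArg x (hσ i).symm)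

lemma kernelOn_eq_of_map_univ_eq (hf : IsSymmetricKernel f) (x : ℕ → E) {e : Fin m ↪ ℕ}
    {I : Finset ℕ} (he : Finset.univ.map e = I) : kernelOn f x I = f (x ∘ e) := by
  have hI : #I = m := by simp [← he]
  rw [kernelOn, dif_pos hI]
  exact hf.apply_comp_eq_of_map_univ_eq x (e := (I.orderEmbOfFin hI).toEmbedding)
    ((I.map_orderEmbOfFin_univ hI).trans he.symm)

lemma kernelOn_range (hf : IsSymmetricKernel f) (x : ℕ → E) :
    kernelOn f x (Finset.range m) = f fun i => x i :=
  hf.kernelOn_eq_of_map_univ_eq x (e := Fin.valEmbedding) <| by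
    rw [Fin.map_valEmbedding_univ, Nat.Iio_eq_range]

lemma kernelOn_Ico (hf : IsSymmetricKernel f) (x : ℕ → E) (a : ℕ) :
    kernelOn f x (Finset.Ico a (a + m)) = f fun i => x (a + i) :=
  hf.kernelOn_eq_of_map_univ_eq x (e := Fin.valEmbedding.trans (addLeftEmbedding a)) <| by
    rw [← Finset.map_map, Fin.map_valEmbedding_univ, Nat.Iio_eq_range, Finset.range_eq_Ico,
      Finset.map_add_left_Ico, add_zero]

lemma kernelOn_map_perm (hf : IsSymmetricKernel f) (x : ℕ → E) (τ : Equiv.Perm ℕ) (I : Finset ℕ) :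
    kernelOn f x (I.map τ.toEmbedding) = kernelOn f (x ∘ τ) I := by
  by_cases hI : #I = m
  · rw [kernelOn.eq_def f (x ∘ τ), dif_pos hI]
    exact hf.kernelOn_eq_of_map_univ_eq x
      (e := (I.orderEmbOfFin hI).toEmbedding.trans τ.toEmbedding)
      (by rw [← Finset.map_map, Finset.map_orderEmbOfFin_univ])
  · rw [kernelOn, kernelOn, dif_neg hI, dif_neg (by rwa [Finset.card_map])]

end IsSymmetricKernel

variable [MeasurableSpace E]

lemma measurable_kernelOn (hf : Measurable f) (I : Finset ℕ) :
    Measurable fun x : ℕ → E => kernelOn f x I := by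
  unfold kernelOn
  split_ifs
  · exact hf.comp (measurable_pi_lambda _ fun i => measurable_pi_apply _)
  · exact measurable_const

variable {Ω : Type*} [MeasurableSpace Ω] {P : Measure Ω}

lemma identDistrib_comp_injective {ι : Type*} [Countable ι] {X : ι → Ω → E}
    (hX : ∀ i, Measurable (X i)) (hIndep : iIndepFun X P) {μ : Measure E}
    (hlaw : ∀ i, P.map (X i) = μ) {φ : ι → ι} (hφ : Function.Injective φ) :
    IdentDistrib (fun ω i => X (φ i) ω) (fun ω i => X i ω) P P where
  aemeasurable_fst := (measurable_pi_lambda _ fun i => hX (φ i)).aemeasurable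
  aemeasurable_snd := (measurable_pi_lambda _ hX).aemeasurable
  map_eq := by
    rw [(hIndep.precomp hφ).map_fun_eq_infinitePi_map fun i => hX (φ i),
      hIndep.map_fun_eq_infinitePi_map hX]
    simp only [hlaw]

lemma covariance_eq_of_identDistrib_prodMk {Ω' : Type*} [MeasurableSpace Ω'] {Q : Measure Ω'}
    {U V : Ω → ℝ} {U' V' : Ω' → ℝ}
    (h : IdentDistrib (fun ω => (U ω, V ω)) (fun ω => (U' ω, V' ω)) P Q) :
    cov[U, V; P] = cov[U', V'; Q] := by
  have hU : P[U] = Q[U'] := (h.comp measurable_fst).integral_eq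
  have hV : P[V] = Q[V'] := (h.comp measurable_snd).integral_eq
  rw [covariance, covariance, hU, hV]
  exact (h.comp (u := fun p : ℝ × ℝ => (p.1 - Q[U']) * (p.2 - Q[V'])) (by fun_prop)).integral_eq

variable {X : ℕ → Ω → E}

theorem hasOverlapCovariance_kernelOn (hf : IsSymmetricKernel f) (hfm : Measurable f)
    (hX : ∀ i, Measurable (X i)) (hIndep : iIndepFun X P) {μ : Measure E}
    (hlaw : ∀ i, P.map (X i) = μ) (hL2 : MemLp (fun ω => f fun i => X i ω) 2 P) :
    HasOverlapCovariance P (fun I ω => kernelOn f (fun i => X i ω) I) m fun ℓ =>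
      cov[fun ω => f fun i => X i ω, fun ω => f fun i => X (m - ℓ + i) ω; P] := by
  have hpair : ∀ {I J I' J' : Finset ℕ}, #I = #I' → #J = #J' → #(I ∩ J) = #(I' ∩ J') →
      IdentDistrib (fun ω => (kernelOn f (fun i => X i ω) I', kernelOn f (fun i => X i ω) J'))
        (fun ω => (kernelOn f (fun i => X i ω) I, kernelOn f (fun i => X i ω) J)) P P := by
    intro I J I' J' hI hJ hIJ
    obtain ⟨τ, rfl, rfl⟩ := exists_perm_map_eq_and_map_eq hI hJ hIJ
    simp only [hf.kernelOn_map_perm]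
    exact (identDistrib_comp_injective hX hIndep hlaw τ.injective).comp
      ((measurable_kernelOn hfm I).prodMk (measurable_kernelOn hfm J))
  refine ⟨fun I hI => ?_, fun I J hI hJ => ?_⟩
  · have := (hpair (I := Finset.range m) (J := Finset.range m) (I' := I) (J' := I)
      (by simp [hI]) (by simp [hI]) (by simp [hI])).comp measurable_fst
    refine this.memLp_iff.2 ?_
    simpa only [Function.comp_def, hf.kernelOn_range] using hL2
  · rw [covariance_eq_of_identDistrib_prodMk (hpair (I := Finset.range m)
      (J := Finset.Ico (m - #(I ∩ J)) (m - #(I ∩ J) + m)) (by simp [hI]) (by simp [hJ]) ?_)]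
    · simp only [hf.kernelOn_range, hf.kernelOn_Ico]
    have := Finset.card_le_card (Finset.inter_subset_left (s₁ := I) (s₂ := J))
    rw [Finset.range_eq_Ico, Finset.Ico_inter_Ico, Nat.card_Ico]
    omega

lemma covariance_kernel_shift_eq_zero (hfm : Measurable f)
    (hX : ∀ i, Measurable (X i)) (hIndep : iIndepFun X P)
    (hL2 : MemLp (fun ω => f fun i => X i ω) 2 P)
    (hL2' : MemLp (fun ω => f fun i => X (m + i) ω) 2 P) :
    cov[fun ω => f fun i => X i ω, fun ω => f fun i => X (m + i) ω; P] = 0 := by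
  have hdisj : Disjoint (Finset.range m) (Finset.Ico m (m + m)) := by
    rw [Finset.range_eq_Ico]
    exact Finset.Ico_disjoint_Ico_consecutive 0 m (m + m)
  have hcomp := (hIndep.indepFun_finset _ _ hdisj hX).comp
    (φ := fun x => f fun i : Fin m => x ⟨i, by simp⟩)
    (ψ := fun x => f fun i : Fin m => x ⟨m + i, by simp⟩)
    (hfm.comp (measurable_pi_lambda _ fun _ => measurable_pi_apply _))
    (hfm.comp (measurable_pi_lambda _ fun _ => measurable_pi_apply _))
  exact hcomp.covariance_eq_zero hL2 hL2'

end SymmetricKernels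

section OrderStatistics

open scoped Finset

variable {m : ℕ}

lemma descStat_of_le (x : Fin m → ℝ) {j : ℕ} (hj : m ≤ j) : descStat x j = 0 :=
  dif_neg hj.not_gt

lemma descStat_le_iff_card_le (x : Fin m → ℝ) {j : ℕ} (hj : j < m) (a : ℝ) :
    descStat x j ≤ a ↔ #{i | a < x i} ≤ j := by
  have hsort : #{i | (x ∘ Tuple.sort x) i ≤ a} = #{i | x i ≤ a} :=
    Finset.card_equiv (Tuple.sort x) fun i => by simp
  have hcompl : #{i | x i ≤ a} + #{i | a < x i} = m := by
    simpa using Finset.card_filter_add_card_filter_not (s := Finset.univ) fun i => x i ≤ a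
  rw [descStat, dif_pos hj,
    ← Tuple.lt_card_le_iff_apply_le_of_monotone (Tuple.monotone_sort x), hsort]
  simp only
  omega

lemma descStat_comp_perm (x : Fin m → ℝ) (σ : Equiv.Perm (Fin m)) (j : ℕ) :
    descStat (x ∘ σ) j = descStat x j := by
  rcases lt_or_ge j m with hj | hj
  · refine eq_of_forall_ge_iff fun a => ?_
    rw [descStat_le_iff_card_le _ hj, descStat_le_iff_card_le _ hj,
      Finset.card_equiv (t := {i | a < x i}) σ fun i => by simp]
  · rw [descStat_of_le _ hj, descStat_of_le _ hj]

lemma descStat_mul_add (x : Fin m → ℝ) {a : ℝ} (ha : 0 < a) (b : ℝ) {j : ℕ} (hj : j < m) :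
    descStat (fun i => a * x i + b) j = a * descStat x j + b := by
  refine eq_of_forall_ge_iff fun c => ?_
  rw [← le_sub_iff_add_le, ← le_div_iff₀' ha, descStat_le_iff_card_le _ hj,
    descStat_le_iff_card_le _ hj]
  simp only [← sub_lt_iff_lt_add, div_lt_iff₀' ha]

lemma descStat_nonneg {x : Fin m → ℝ} (hx : ∀ i, 0 ≤ x i) (j : ℕ) : 0 ≤ descStat x j := by
  rw [descStat]
  split_ifs
  exacts [hx _, le_rfl]

lemma descStat_insertNth_zero (i : Fin (m + 1)) {y : Fin m → ℝ} (hy : ∀ k, 0 ≤ y k) {j : ℕ}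
    (hj : j < m + 1) : descStat (i.insertNth 0 y : Fin (m + 1) → ℝ) j = descStat y j := by
  have hnonneg : ∀ k, 0 ≤ (i.insertNth 0 y : Fin (m + 1) → ℝ) k := by
    simpa [Fin.forall_iff_succAbove i] using hy
  refine eq_of_forall_ge_iff fun a => ?_
  rcases lt_or_ge a 0 with ha | ha
  · exact iff_of_false (ha.trans_le (descStat_nonneg hnonneg j)).not_ge
      (ha.trans_le (descStat_nonneg hy j)).not_ge
  have hcard : #{k | a < (i.insertNth 0 y : Fin (m + 1) → ℝ) k} = #{k | a < y k} := by
    rw [Finset.card_filter, Finset.card_filter, Fin.sum_univ_succAbove _ i]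
    simp only [Fin.insertNth_apply_same, Fin.insertNth_apply_succAbove, ha.not_gt, if_false,
      zero_add]
  rw [descStat_le_iff_card_le _ hj, hcard]
  rcases lt_or_ge j m with hjm | hjm
  · rw [descStat_le_iff_card_le _ hjm]
  · rw [descStat_of_le _ hjm]
    exact iff_of_true ((Finset.card_le_univ _).trans (by simpa using hjm)) ha

lemma measurable_descStat (m j : ℕ) : Measurable fun x : Fin m → ℝ => descStat x j := by
  rcases lt_or_ge j m with hj | hj
  · refine measurable_of_Iic fun a => ?_
    have hcard : Measurable fun x : Fin m → ℝ => #{i | a < x i} := by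
      simp only [Finset.card_filter]
      exact Finset.measurable_sum _ fun i _ => Measurable.ite
        (measurableSet_lt measurable_const (measurable_pi_apply i)) measurable_const
        measurable_const
    simpa only [preimage, mem_Iic, descStat_le_iff_card_le _ hj] using
      measurableSet_le hcard measurable_const
  · simp only [descStat_of_le _ hj, measurable_const]

variable {q : ℕ} {K : (Fin q → ℝ) → ℝ}

lemma isSymmetricKernel_Km (K : (Fin q → ℝ) → ℝ) (m : ℕ) : IsSymmetricKernel (Km K m) :=
  fun σ x => congrArg K (funext fun j => descStat_comp_perm x σ j)

lemma measurable_Km (hK : Measurable K) (m : ℕ) : Measurable (Km K m) :=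
  hK.comp (measurable_pi_lambda _ fun j => measurable_descStat m j)

lemma LocScaleInvariant.Km_mul_add (hK : LocScaleInvariant K) (hqm : q ≤ m) {a : ℝ} (ha : 0 < a)
    (b : ℝ) (x : Fin m → ℝ) : Km K m (fun i => a * x i + b) = Km K m x := by
  rw [Km, Km, ← hK a b ha fun j => descStat x j]
  exact congrArg K (funext fun j => descStat_mul_add x ha b (j.2.trans_le hqm))

lemma Km_insertNth_zero (K : (Fin q → ℝ) → ℝ) (hqm : q ≤ m + 1) (i : Fin (m + 1))
    {y : Fin m → ℝ} (hy : ∀ k, 0 ≤ y k) :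
    Km K (m + 1) (i.insertNth 0 y : Fin (m + 1) → ℝ) = Km K m y :=
  congrArg K (funext fun j => descStat_insertNth_zero i hy (j.2.trans_le hqm))

end OrderStatistics

section Pareto

lemma measurable_paretoPDF (t r : ℝ) : Measurable (paretoPDF t r) :=
  (measurable_paretoPDFReal t r).ennreal_ofReal

lemma ae_le_paretoMeasure (t r : ℝ) : ∀ᵐ x ∂paretoMeasure t r, t ≤ x := by
  rw [paretoMeasure, ae_withDensity_iff (measurable_paretoPDF t r)]
  filter_upwards with x hx
  exact not_lt.1 fun h => hx (paretoPDF_of_lt h)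

lemma paretoMeasure_restrict_Ici {s t : ℝ} (ht : 0 < t) (hts : t ≤ s) (r : ℝ) :
    (paretoMeasure t r).restrict (Ici s) =
      ENNReal.ofReal ((t / s) ^ r) • paretoMeasure s r := by
  have hs : 0 < s := ht.trans_le hts
  rw [paretoMeasure, paretoMeasure, restrict_withDensity measurableSet_Ici,
    ← withDensity_indicator measurableSet_Ici, ← withDensity_smul _ (measurable_paretoPDF s r)]
  congr 1 with x
  by_cases hx : s ≤ x
  · rw [indicator_of_mem (mem_Ici.2 hx), Pi.smul_apply, smul_eq_mul, paretoPDF_of_le hx,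
      paretoPDF_of_le (hts.trans hx), ← ENNReal.ofReal_mul (by positivity), div_rpow ht.le hs.le]
    congr 1
    field_simp
  · rw [indicator_of_notMem (by simpa using hx), Pi.smul_apply, paretoPDF_of_lt (not_le.1 hx),
      smul_zero]

lemma paretoMeasure_Ici {t r : ℝ} (ht : 0 < t) (hr : 0 < r) (s : ℝ) :
    paretoMeasure t r (Ici s) = ENNReal.ofReal ((t / max t s) ^ r) := by
  have hmax : paretoMeasure t r (Ici s) = paretoMeasure t r (Ici (max t s)) := by
    refine measure_congr (eventuallyEq_set.2 ?_)
    filter_upwards [ae_le_paretoMeasure t r] with x hx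
    simp [hx]
  have := isProbabilityMeasure_paretoMeasure (ht.trans_le (le_max_left t s)) hr
  rw [hmax, ← Measure.restrict_apply_univ, paretoMeasure_restrict_Ici ht (le_max_left t s),
    Measure.smul_apply, measure_univ, smul_eq_mul, mul_one]

lemma paretoMeasure_map_mul {a t r : ℝ} (ha : 0 < a) (ht : 0 < t) (hr : 0 < r) :
    (paretoMeasure t r).map (a * ·) = paretoMeasure (a * t) r := by
  have := isProbabilityMeasure_paretoMeasure ht hr
  refine Measure.ext_of_Ici _ _ fun s => ?_
  have hpre : (a * ·) ⁻¹' Ici s = Ici (s / a) := by ext x; simp [div_le_iff₀' ha]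
  rw [Measure.map_apply (by fun_prop) measurableSet_Ici, hpre, paretoMeasure_Ici ht hr,
    paretoMeasure_Ici (by positivity) hr, ← mul_div_mul_left t _ ha.ne',
    mul_max_of_nonneg _ _ ha.le, mul_div_cancel₀ s ha.ne']

lemma lintegral_div_rpow_paretoMeasure {a t r : ℝ} (ha : 0 ≤ a) (ht : 0 < t) (hr : 0 < r) :
    ∫⁻ x, ENNReal.ofReal ((t / x) ^ a) ∂paretoMeasure t r = ENNReal.ofReal (r / (r + a)) := by
  have hpdf : ∀ x, paretoPDF t r x * ENNReal.ofReal ((t / x) ^ a) =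
      ENNReal.ofReal (r / (r + a)) * paretoPDF t (r + a) x := fun x => by
    rcases lt_or_ge x t with hx | hx
    · rw [paretoPDF_of_lt hx, paretoPDF_of_lt hx, zero_mul, mul_zero]
    have hx0 : 0 < x := ht.trans_le hx
    rw [paretoPDF_of_le hx, paretoPDF_of_le hx, ← ENNReal.ofReal_mul (by positivity),
      ← ENNReal.ofReal_mul (by positivity), div_rpow ht.le hx0.le, rpow_add ht,
      show -(r + a + 1) = -(r + 1) - a by ring, rpow_sub hx0]
    congr 1
    field_simp
  rw [paretoMeasure, lintegral_withDensity_eq_lintegral_mul _ (measurable_paretoPDF t r)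
    (by fun_prop)]
  simp only [Pi.mul_apply, hpdf]
  rw [lintegral_const_mul _ (measurable_paretoPDF t _),
    lintegral_paretoPDF_eq_one ht (by positivity), mul_one]

end Pareto

section MinimumSlices

variable {E : Type*} [MeasurableSpace E] {m : ℕ}

lemma measurable_insertNth (i : Fin (m + 1)) (t : E) :
    Measurable fun y : Fin m → E => (i.insertNth t y : Fin (m + 1) → E) :=
  (MeasurableEquiv.piFinSuccAbove (fun _ => E) i).symm.measurable.comp measurable_prodMk_left

variable [TopologicalSpace E] [OpensMeasurableSpace E] [SecondCountableTopology E] [LinearOrder E]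
  [OrderClosedTopology E]

lemma pi_inter_setOf_forall_le (μ : Measure E) [SigmaFinite μ] (i : Fin (m + 1))
    {S : Set (Fin (m + 1) → E)} (hS : MeasurableSet S) :
    (Measure.pi fun _ => μ) (S ∩ {x | ∀ j, x i ≤ x j}) =
      ∫⁻ t, (Measure.pi fun _ : Fin m => μ).restrict (univ.pi fun _ => Ici t)
        ((fun y => (i.insertNth t y : Fin (m + 1) → E)) ⁻¹' S) ∂μ := by
  have hmin : MeasurableSet {x : Fin (m + 1) → E | ∀ j, x i ≤ x j} := by
    simp only [ofPred_forall]
    exact MeasurableSet.iInter fun j =>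
      measurableSet_le (measurable_pi_apply i) (measurable_pi_apply j)
  rw [← (measurePreserving_piFinSuccAbove (fun _ => μ) i).symm.measure_preimage
    (hS.inter hmin).nullMeasurableSet, Measure.prod_apply
    ((MeasurableEquiv.piFinSuccAbove _ i).symm.measurable (hS.inter hmin))]
  refine lintegral_congr fun t => ?_
  rw [Measure.restrict_apply (measurable_insertNth i t hS)]
  congr 1 with y
  simp [Fin.insertNthEquiv, Fin.forall_iff_succAbove i, Pi.le_def]

lemma pi_le_sum_lintegral_insertNth (μ : Measure E) [SigmaFinite μ]
    {S : Set (Fin (m + 1) → E)} (hS : MeasurableSet S) :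
    (Measure.pi fun _ => μ) S ≤
      ∑ i : Fin (m + 1), ∫⁻ t, (Measure.pi fun _ : Fin m => μ).restrict (univ.pi fun _ => Ici t)
        ((fun y => (i.insertNth t y : Fin (m + 1) → E)) ⁻¹' S) ∂μ := by
  have hcover : S ⊆ ⋃ i, S ∩ {x | ∀ j, x i ≤ x j} := fun x hx => by
    obtain ⟨i, hi⟩ := Finite.exists_min x
    exact mem_iUnion.2 ⟨i, hx, hi⟩
  simp only [← pi_inter_setOf_forall_le μ _ hS]
  exact (measure_mono hcover).trans (measure_iUnion_fintype_le _ _)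

end MinimumSlices

section ThresholdStability

variable {m : ℕ}

lemma pareto1_restrict_Ici {t : ℝ} (ht : 1 ≤ t) :
    pareto1.restrict (Ici t) = ENNReal.ofReal t⁻¹ • pareto1.map (t * ·) := by
  rw [pareto1, paretoMeasure_restrict_Ici one_pos ht,
    paretoMeasure_map_mul (one_pos.trans_le ht) one_pos one_pos, one_div, rpow_one, mul_one]

lemma lintegral_inv_pow_pareto1 (m : ℕ) :
    ∫⁻ t, ENNReal.ofReal t⁻¹ ^ m ∂pareto1 = ((m : ℝ≥0∞) + 1)⁻¹ := by
  have hpow : ∀ᵐ t ∂pareto1, ENNReal.ofReal t⁻¹ ^ m = ENNReal.ofReal ((1 / t) ^ (m : ℝ)) := by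
    filter_upwards [ae_le_paretoMeasure 1 1] with t ht
    rw [rpow_natCast, one_div, ENNReal.ofReal_pow (by positivity)]
  rw [lintegral_congr_ae hpow, pareto1,
    lintegral_div_rpow_paretoMeasure m.cast_nonneg one_pos one_pos, one_div,
    ENNReal.ofReal_inv_of_pos (by positivity), ENNReal.ofReal_add one_pos.le m.cast_nonneg,
    ENNReal.ofReal_one, ENNReal.ofReal_natCast, add_comm]

lemma pi_pareto1_restrict_Ici (m : ℕ) {t : ℝ} (ht : 1 ≤ t) :
    (Measure.pi fun _ : Fin m => pareto1).restrict (univ.pi fun _ => Ici t) =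
      ENNReal.ofReal t⁻¹ ^ m • (Measure.pi fun _ : Fin m => pareto1).map fun y i => t * y i := by
  have : IsProbabilityMeasure (pareto1.map (t * ·)) :=
    Measure.isProbabilityMeasure_map (by fun_prop)
  rw [Measure.restrict_pi_pi,
    Measure.pi_map_pi (μ := fun _ : Fin m => pareto1) (f := fun _ => (t * ·)) fun _ => by fun_prop]
  refine Measure.pi_eq fun s _ => ?_
  simp only [pareto1_restrict_Ici ht, Measure.smul_apply, Measure.pi_pi, smul_eq_mul,
    Finset.prod_mul_distrib, Finset.prod_const, Finset.card_univ, Fintype.card_fin]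

-- The slices over the position of the minimum overlap where the minimum is attained twice; bounding
-- by their sum is enough, because both sides are probability measures.
theorem map_pi_pareto1_succ {β : Type*} [MeasurableSpace β] {g : (Fin (m + 1) → ℝ) → β}
    {g' : (Fin m → ℝ) → β} (hg : Measurable g) (hg' : Measurable g')
    (hgg' : ∀ (i : Fin (m + 1)) (t : ℝ) (y : Fin m → ℝ), 1 ≤ t → (∀ k, 1 ≤ y k) →
      g (i.insertNth t fun k => t * y k) = g' y) :
    (Measure.pi fun _ => pareto1).map g = (Measure.pi fun _ => pareto1).map g' := by
  have := Measure.isProbabilityMeasure_map (μ := .pi fun _ => pareto1) hg.aemeasurable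
  have := Measure.isProbabilityMeasure_map (μ := .pi fun _ => pareto1) hg'.aemeasurable
  have hone_le : ∀ᵐ y ∂(Measure.pi fun _ : Fin m => pareto1), ∀ k, 1 ≤ y k := ae_all_iff.2 fun k =>
    Measure.tendsto_eval_ae_ae.eventually (ae_le_paretoMeasure 1 1)
  refine Measure.eq_of_le_of_isProbabilityMeasure (Measure.le_iff.2 fun S hS => ?_)
  have hslice : ∀ i : Fin (m + 1),
      ∫⁻ t, (Measure.pi fun _ : Fin m => pareto1).restrict (univ.pi fun _ => Ici t)
        ((fun y => (i.insertNth t y : Fin (m + 1) → ℝ)) ⁻¹' (g ⁻¹' S)) ∂pareto1 =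
      ((m : ℝ≥0∞) + 1)⁻¹ * (Measure.pi fun _ => pareto1) (g' ⁻¹' S) := fun i => by
    rw [← lintegral_inv_pow_pareto1, ← lintegral_mul_const _ (by fun_prop)]
    refine lintegral_congr_ae ?_
    filter_upwards [ae_le_paretoMeasure 1 1] with t ht
    rw [pi_pareto1_restrict_Ici m ht, Measure.smul_apply, smul_eq_mul, Measure.map_apply
      (by fun_prop) (measurable_insertNth i t (hg hS))]
    congr 1
    refine measure_congr (eventuallyEq_set.2 ?_)
    filter_upwards [hone_le] with y hy
    simp only [mem_preimage, hgg' i t y ht hy]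
  rw [Measure.map_apply hg hS, Measure.map_apply hg' hS]
  refine (pi_le_sum_lintegral_insertNth pareto1 (hg hS)).trans_eq ?_
  simp only [hslice, Finset.sum_const, Finset.card_univ, Fintype.card_fin, nsmul_eq_mul]
  rw [← mul_assoc, Nat.cast_succ, ENNReal.mul_inv_cancel (by simp) (by simp), one_mul]

end ThresholdStability

section GeneralizedPareto

variable {q m : ℕ} {K : (Fin q → ℝ) → ℝ}

lemma hGamma_mul (γ : ℝ) {t y : ℝ} (ht : 0 < t) (hy : 0 < y) :
    hGamma γ (t * y) = t ^ γ * hGamma γ y + hGamma γ t := by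
  rcases eq_or_ne γ 0 with rfl | hγ
  · simp only [hGamma, if_true, log_mul ht.ne' hy.ne', rpow_zero, one_mul, add_comm]
  · simp only [hGamma, hγ, if_false, mul_rpow ht.le hy.le]
    ring

lemma hGamma_nonneg (γ : ℝ) {y : ℝ} (hy : 1 ≤ y) : 0 ≤ hGamma γ y := by
  rcases lt_trichotomy γ 0 with hγ | rfl | hγ
  · rw [hGamma, if_neg hγ.ne]
    exact div_nonneg_of_nonpos (sub_nonpos.2 (rpow_le_one_of_one_le_of_nonpos hy hγ.le)) hγ.le
  · simpa only [hGamma, if_true] using log_nonneg hy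
  · rw [hGamma, if_neg hγ.ne']
    exact div_nonneg (sub_nonneg.2 (one_le_rpow hy hγ.le)) hγ.le

lemma gpPi_eq_map_pi_pareto1 (γ : ℝ) (r : ℕ) :
    gpPi γ r = (Measure.pi fun _ => pareto1).map fun y i => hGamma γ (y i) := by
  have : IsProbabilityMeasure (pareto1.map (hGamma γ)) :=
    inferInstanceAs (IsProbabilityMeasure (gpMeasure γ))
  exact (Measure.pi_map_pi (μ := fun _ : Fin r => pareto1) (f := fun _ => hGamma γ)
    fun _ => (measurable_hGamma γ).aemeasurable).symm

-- Conditionally on the minimum `h_γ(t)` of `m + 1` GP variables, the other `m` are distributed as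
-- `t ^ γ * Z_k + h_γ(t)`, and the affine map is undone by invariance of the kernel.
lemma LocScaleInvariant.map_Km_gpPi_succ (hLS : LocScaleInvariant K) (hK : Measurable K) (γ : ℝ)
    (hqm : q ≤ m + 1) : (gpPi γ (m + 1)).map (Km K (m + 1)) = (gpPi γ m).map (Km K m) := by
  have hh : ∀ r, Measurable fun (y : Fin r → ℝ) i => hGamma γ (y i) := fun r =>
    measurable_pi_lambda _ fun i => (measurable_hGamma γ).comp (measurable_pi_apply i)
  rw [gpPi_eq_map_pi_pareto1, gpPi_eq_map_pi_pareto1, Measure.map_map (measurable_Km hK _) (hh _),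
    Measure.map_map (measurable_Km hK _) (hh _)]
  refine map_pi_pareto1_succ ((measurable_Km hK _).comp (hh _))
    ((measurable_Km hK _).comp (hh _)) fun i t y ht hy => ?_
  have ht0 : 0 < t := one_pos.trans_le ht
  have haffine : (fun k => hGamma γ ((i.insertNth t fun k => t * y k : Fin (m + 1) → ℝ) k)) =
      fun k => t ^ γ * (i.insertNth 0 fun k => hGamma γ (y k) : Fin (m + 1) → ℝ) k +
        hGamma γ t := by
    ext k
    induction k using Fin.succAboveCases i with
    | x => simp
    | p k => simp [hGamma_mul γ ht0 (one_pos.trans_le (hy k))]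
  rw [Function.comp_apply, Function.comp_apply, haffine, hLS.Km_mul_add hqm (by positivity),
    Km_insertNth_zero K hqm i fun k => hGamma_nonneg γ (hy k)]

lemma LocScaleInvariant.map_Km_gpPi (hLS : LocScaleInvariant K) (hK : Measurable K) (γ : ℝ)
    (hqm : q - 1 ≤ m) :
    (gpPi γ m).map (Km K m) = (gpPi γ (q - 1)).map fun z => K (refVec z) := by
  induction m, hqm using Nat.le_induction with
  | base => rfl
  | succ m hm ih => exact (hLS.map_Km_gpPi_succ hK γ (by omega)).trans ih

end GeneralizedPareto

section VarianceApproximation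

open scoped Finset

lemma UStat_eq_average_kernelOn {q : ℕ} (K : (Fin q → ℝ) → ℝ) (m n : ℕ) (x : ℕ → ℝ) :
    UStat K m n (fun i => x i) = (n.choose m : ℝ)⁻¹ *
      ∑ I ∈ (Finset.range n).powersetCard m, kernelOn (Km K m) x I := by
  rw [← Nat.Iio_eq_range, ← Fin.map_valEmbedding_univ, Finset.powersetCard_map, Finset.sum_map,
    UStat]
  congr 1
  refine Finset.sum_congr rfl fun I hI => ?_
  obtain rfl := (Finset.mem_powersetCard.1 hI).2
  refine ((isSymmetricKernel_Km K #I).kernelOn_eq_of_map_univ_eq x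
    (e := (I.orderEmbOfFin rfl).toEmbedding.trans Fin.valEmbedding) ?_).symm
  rw [← Finset.map_map, Finset.map_orderEmbOfFin_univ]
  rfl

variable {Ω : Type*} [MeasurableSpace Ω] {P : Measure Ω} {γ : ℝ} {q m : ℕ}
  {K : (Fin q → ℝ) → ℝ} {Z : ℕ → Ω → ℝ}

lemma map_block_eq_gpPi (hZ : ∀ i, Measurable (Z i)) (hIndep : iIndepFun Z P)
    (hDist : ∀ i, P.map (Z i) = gpMeasure γ) (m a : ℕ) :
    P.map (fun ω (i : Fin m) => Z (a + i) ω) = gpPi γ m := by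
  have := hIndep.isProbabilityMeasure
  have hinj : Function.Injective fun i : Fin m => a + (i : ℕ) := fun i j hij => by
    simpa [Fin.ext_iff] using hij
  refine ((iIndepFun_iff_map_fun_eq_pi_map fun i : Fin m => (hZ (a + i)).aemeasurable).1
    (hIndep.precomp hinj)).trans ?_
  simp only [hDist, gpPi]

lemma identDistrib_Km_block (hK : Measurable K) (hLS : LocScaleInvariant K)
    (hZ : ∀ i, Measurable (Z i)) (hIndep : iIndepFun Z P)
    (hDist : ∀ i, P.map (Z i) = gpMeasure γ) (hqm : q - 1 ≤ m) (a : ℕ) :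
    IdentDistrib (fun ω => Km K m fun i => Z (a + i) ω) (fun z => K (refVec z)) P
      (gpPi γ (q - 1)) where
  aemeasurable_fst :=
    ((measurable_Km hK m).comp (measurable_pi_lambda _ fun i => hZ (a + i))).aemeasurable
  aemeasurable_snd := (measurable_Km hK (q - 1)).aemeasurable
  map_eq := by
    rw [← hLS.map_Km_gpPi hK γ hqm, ← map_block_eq_gpPi hZ hIndep hDist m a,
      Measure.map_map (measurable_Km hK m) (measurable_pi_lambda _ fun i => hZ (a + i))]
    rfl

theorem abs_variance_UStat_sub_le (hK : Measurable K) (hLS : LocScaleInvariant K)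
    (hZ : ∀ i, Measurable (Z i)) (hIndep : iIndepFun Z P)
    (hDist : ∀ i, P.map (Z i) = gpMeasure γ)
    (hL2 : MemLp (fun z => K (refVec z)) 2 (gpPi γ (q - 1))) (hqm : q - 1 ≤ m) (hm : m ≠ 0)
    {n : ℕ} (hmn : m ≤ n) :
    |Var[fun ω => UStat K m n fun i => Z i ω; P] - (m : ℝ) ^ 2 / n * zetaCov P K Z m 1| ≤
      ((m : ℝ) / n) ^ 2 * Var[fun z => K (refVec z); gpPi γ (q - 1)] := by
  have := hIndep.isProbabilityMeasure
  have hident := identDistrib_Km_block hK hLS hZ hIndep hDist hqm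
  have hshift : ∀ a, MemLp (fun ω => Km K m fun i => Z (a + i) ω) 2 P := fun a =>
    (hident a).memLp_iff.2 hL2
  have hbase : MemLp (fun ω => Km K m fun i => Z i ω) 2 P := by simpa only [zero_add] using hshift 0
  have hzeta : ∀ ℓ, cov[fun ω => Km K m fun i => Z i ω,
      fun ω => Km K m fun i => Z (m - ℓ + i) ω; P] = zetaCov P K Z m ℓ := fun ℓ =>
    covariance_eq_sub hbase (hshift _)
  have hoverlap := hasOverlapCovariance_kernelOn (isSymmetricKernel_Km K m) (measurable_Km hK m)
    hZ hIndep hDist hbase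
  have hzero : cov[fun ω => Km K m fun i => Z i ω,
      fun ω => Km K m fun i => Z (m - 0 + i) ω; P] = 0 :=
    covariance_kernel_shift_eq_zero (measurable_Km hK m) hZ hIndep hbase (hshift m)
  have hself : cov[fun ω => Km K m fun i => Z i ω,
      fun ω => Km K m fun i => Z (m - m + i) ω; P] =
        Var[fun z => K (refVec z); gpPi γ (q - 1)] := by
    rw [← (hident 0).variance_eq]
    simp only [Nat.sub_self, zero_add]
    exact covariance_self hbase.aestronglyMeasurable.aemeasurable
  have hbound := hoverlap.abs_variance_average_sub_le hzero (S := Finset.range n)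
    (by rwa [Finset.card_range]) hm
  simp only [Finset.card_range, ← UStat_eq_average_kernelOn, hzeta 1, hself] at hbound
  exact hbound

lemma DegreeCond.tendsto_div {m : ℕ → ℕ} (h : DegreeCond m) :
    Tendsto (fun n => (m n : ℝ) / n) atTop (𝓝 0) := by
  obtain ⟨ε, hε, -, -, hm, -⟩ := h
  have hpow : Tendsto (fun n : ℕ => (n : ℝ) ^ (-ε)) atTop (𝓝 0) :=
    (tendsto_rpow_neg_atTop hε).comp tendsto_natCast_atTop_atTop
  rw [← mul_zero (0 : ℝ)]
  refine (hm.mul hpow).congr' ?_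
  filter_upwards [eventually_gt_atTop 0] with n hn
  have hn' : (0 : ℝ) < n := Nat.cast_pos.2 hn
  rw [rpow_sub hn', rpow_one, rpow_neg hn'.le]
  field_simp

-- A zero degree is compatible with `DegreeCond` when `δ ≠ 1`, since then `log n / 0 ^ (1 - δ) = 0`.
lemma DegreeCond.eventually_eq_zero_or_le {m : ℕ → ℕ} (h : DegreeCond m) (q : ℕ) :
    ∀ᶠ n in atTop, m n = 0 ∨ q ≤ m n := by
  obtain ⟨-, -, δ, -, -, hlog⟩ := h
  filter_upwards [hlog.eventually_lt_const one_pos,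
    (tendsto_log_atTop.comp tendsto_natCast_atTop_atTop).eventually_gt_atTop ((q : ℝ) ^ |1 - δ|)]
    with n hratio hlarge
  by_contra! hmn
  have hone_le : (1 : ℝ) ≤ m n := Nat.one_le_cast.2 (Nat.one_le_iff_ne_zero.2 hmn.1)
  rw [div_lt_one (by positivity)] at hratio
  refine (hlarge.trans hratio).not_ge ?_
  calc (m n : ℝ) ^ (1 - δ) ≤ (m n : ℝ) ^ |1 - δ| :=
        rpow_le_rpow_of_exponent_le hone_le (le_abs_self _)
    _ ≤ (q : ℝ) ^ |1 - δ| :=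
        rpow_le_rpow (Nat.cast_nonneg _) (Nat.cast_le.2 hmn.2.le) (abs_nonneg _)

lemma MomentCond.memLp_two (h : MomentCond γ K) (hK : Measurable K) :
    MemLp (fun z => K (refVec z)) 2 (gpPi γ (q - 1)) := by
  refine ⟨(measurable_Km hK (q - 1)).aestronglyMeasurable, ?_⟩
  rw [eLpNorm_lt_top_iff_lintegral_rpow_enorm_lt_top two_ne_zero ENNReal.ofNat_ne_top]
  simpa only [ENNReal.toReal_ofNat, Real.enorm_eq_ofReal_abs,
    ENNReal.ofReal_rpow_of_nonneg (abs_nonneg _) zero_le_two] using h 2 two_pos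

theorem extreme_U_statistic_variance_approx_general (hK : Measurable K)
    (hLS : LocScaleInvariant K) (hL2 : MemLp (fun z => K (refVec z)) 2 (gpPi γ (q - 1)))
    {m : ℕ → ℕ} (hdiv : Tendsto (fun n => (m n : ℝ) / n) atTop (𝓝 0))
    (hlarge : ∀ᶠ n in atTop, m n = 0 ∨ q - 1 ≤ m n) (hZ : ∀ i, Measurable (Z i))
    (hIndep : iIndepFun Z P) (hDist : ∀ i, P.map (Z i) = gpMeasure γ) :
    Tendsto (fun n : ℕ => ((n : ℝ) / m n) *
      |Var[fun ω => UStat K (m n) n fun i => Z i ω; P] -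
        (m n : ℝ) / ((n : ℝ) / m n) * zetaCov P K Z (m n) 1|) atTop (𝓝 0) := by
  have hlim := hdiv.mul_const Var[fun z => K (refVec z); gpPi γ (q - 1)]
  rw [zero_mul] at hlim
  refine squeeze_zero' (.of_forall fun n => by positivity) ?_ hlim
  filter_upwards [hlarge, hdiv.eventually_lt_const one_pos, eventually_gt_atTop 0] with
    n hqm hlt hn
  rcases eq_or_ne (m n) 0 with hm | hm
  · simp [hm]
  have hmn : m n ≤ n := by
    rw [div_lt_one (Nat.cast_pos.2 hn)] at hlt
    exact_mod_cast hlt.le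
  have hbound := abs_variance_UStat_sub_le hK hLS hZ hIndep hDist hL2 (hqm.resolve_left hm) hm hmn
  rw [div_div_eq_mul_div, ← sq]
  refine (mul_le_mul_of_nonneg_left hbound (by positivity)).trans_eq ?_
  field_simp

end VarianceApproximation

/-- Proposition: variance approximation.
Under the kernel and degree conditions, `|var(U^m_{n,Z}) - (m/k) ζ_{m,1}| = o(1/k)`,
i.e. `k · |var(U^m_{n,Z}) - (m/k) ζ_{m,1}| → 0`, where `k = n/m`. -/
theorem extreme_U_statistic_variance_approx
    {Ω : Type*} [MeasurableSpace Ω] (P : Measure Ω) [IsProbabilityMeasure P]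
    (γ : ℝ) (q : ℕ) (hq : 3 ≤ q)
    (K : (Fin q → ℝ) → ℝ) (hKmeas : Measurable K)
    (hLS : LocScaleInvariant K)
    (hNonconst : ∃ x y : Fin q → ℝ, K x ≠ K y)
    (hMom : MomentCond γ K)
    (m : ℕ → ℕ) (hDeg : DegreeCond m)
    (Z : ℕ → Ω → ℝ) (hZmeas : ∀ i, Measurable (Z i))
    (hIndep : iIndepFun Z P)
    (hDist : ∀ i, Measure.map (Z i) P = gpMeasure γ) :
    Tendsto
      (fun n : ℕ => ((n : ℝ) / (m n : ℝ)) *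
        |variance (fun ω => UStat K (m n) n (fun i : Fin n => Z i ω)) P -
          ((m n : ℝ) / ((n : ℝ) / (m n : ℝ))) * zetaCov P K Z (m n) 1|)
      atTop (𝓝 0) :=
  extreme_U_statistic_variance_approx_general hKmeas hLS (hMom.memLp_two hKmeas) hDeg.tendsto_div
    (hDeg.eventually_eq_zero_or_le (q - 1)) hZmeas hIndep hDist

end
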